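/- arXiv:2407.00185 — 2 statements merged into one kernel-verified Lean document; each statement's English description precedes it below -/
import Mathlib

section
/- Let R : ℝ^n × ℝ^m → ℝ^m and d : ℝ^n → ℝ^m be maps such that d is differentiable at P₀, R is differentiable at (P₀, d(P₀)), and R(P, d(P)) = 0 for every P ∈ ℝ^n. Let K be the partial Fréchet derivative of R with respect to its second argument at (P₀, d(P₀)), assumed invertible, and let B be the partial Fréchet derivative of R with respect to its first argument at (P₀, d(P₀)). Let f : ℝ^n × ℝ^m → ℝ be differentiable at (P₀, d(P₀)), and define the reduced objective F : ℝ^n → ℝ by F(P) = f(P, d(P)). Let λ ∈ ℝ^m be the unique vector satisfying Kᵀ λ = −∇_d f(P₀, d(P₀)), where ∇_d f is the gradient of f with respect to its second argument and Kᵀ is the adjoint (transpose) of K. Then F is differentiable at P₀ and for every v ∈ ℝ^n, DF(P₀)[v] = ∂_P f(P₀, d(P₀))[v] + ⟨λ, B v⟩, where ⟨·,·⟩ is the Euclidean inner product on ℝ^m. -/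
open scoped RealInnerProductSpace

/-- Chain rule splitting the total derivative along a graph into its two partial derivatives. -/
theorem total_deriv_aux {E F G : Type*} [NormedAddCommGroup E] [NormedSpace ℝ E]
    [NormedAddCommGroup F] [NormedSpace ℝ F] [NormedAddCommGroup G] [NormedSpace ℝ G]
    (g : E × F → G) (d : E → F) (P₀ : E) (hd : DifferentiableAt ℝ d P₀)
    (hg : DifferentiableAt ℝ g (P₀, d P₀)) :
    DifferentiableAt ℝ (fun P => g (P, d P)) P₀ ∧
      ∀ v, fderiv ℝ (fun P => g (P, d P)) P₀ v =
        fderiv ℝ (fun P => g (P, d P₀)) P₀ v +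
          fderiv ℝ (fun y => g (P₀, y)) (d P₀) (fderiv ℝ d P₀ v) := by
  have h1 : HasFDerivAt (fun P => g (P, d P)) _ P₀ :=
    HasFDerivAt.comp (f := fun P => (P, d P)) P₀ hg.hasFDerivAt
      ((hasFDerivAt_id P₀).prodMk hd.hasFDerivAt)
  have h2 : HasFDerivAt (fun P => g (P, d P₀)) _ P₀ :=
    HasFDerivAt.comp (f := fun P => (P, d P₀)) P₀ hg.hasFDerivAt
      ((hasFDerivAt_id P₀).prodMk (hasFDerivAt_const (d P₀) P₀))
  have h3 : HasFDerivAt (fun y => g (P₀, y)) _ (d P₀) :=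
    HasFDerivAt.comp (f := fun y => (P₀, y)) (d P₀) hg.hasFDerivAt
      ((hasFDerivAt_const P₀ (d P₀)).prodMk (hasFDerivAt_id (d P₀)))
  refine ⟨h1.differentiableAt, fun v => ?_⟩
  rw [h1.fderiv, h2.fderiv, h3.fderiv]
  simp [← map_add]

/-- Adjoint-method total derivative `d_P f = ∂_P f + λᵀ ∂_P R`:
with the state `d(P)` determined by the residual equation `R(P, d(P)) = 0`, invertible tangent
stiffness `K = ∂_d R`, and adjoint variable `λ` solving `Kᵀ λ = -∇_d f`, the reduced objective
`F(P) = f(P, d(P))` is differentiable at `P₀` and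
`DF(P₀)[v] = ∂_P f(P₀, d(P₀))[v] + ⟨λ, B v⟩` for all `v`. -/
theorem adjoint_method_total_derivative {n m : ℕ}
    (R : EuclideanSpace ℝ (Fin n) × EuclideanSpace ℝ (Fin m) → EuclideanSpace ℝ (Fin m))
    (d : EuclideanSpace ℝ (Fin n) → EuclideanSpace ℝ (Fin m))
    (f : EuclideanSpace ℝ (Fin n) × EuclideanSpace ℝ (Fin m) → ℝ)
    (P₀ : EuclideanSpace ℝ (Fin n))
    (hd : DifferentiableAt ℝ d P₀)
    (hR : DifferentiableAt ℝ R (P₀, d P₀))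
    (hres : ∀ P, R (P, d P) = 0)
    (K : EuclideanSpace ℝ (Fin m) ≃L[ℝ] EuclideanSpace ℝ (Fin m))
    (hK : (K : EuclideanSpace ℝ (Fin m) →L[ℝ] EuclideanSpace ℝ (Fin m)) =
      fderiv ℝ (fun y => R (P₀, y)) (d P₀))
    (B : EuclideanSpace ℝ (Fin n) →L[ℝ] EuclideanSpace ℝ (Fin m))
    (hB : B = fderiv ℝ (fun P => R (P, d P₀)) P₀)
    (hf : DifferentiableAt ℝ f (P₀, d P₀))
    (lam : EuclideanSpace ℝ (Fin m))
    (hlam : ContinuousLinearMap.adjoint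
        (K : EuclideanSpace ℝ (Fin m) →L[ℝ] EuclideanSpace ℝ (Fin m)) lam =
      -gradient (fun y => f (P₀, y)) (d P₀)) :
    DifferentiableAt ℝ (fun P => f (P, d P)) P₀ ∧
      ∀ v : EuclideanSpace ℝ (Fin n),
        fderiv ℝ (fun P => f (P, d P)) P₀ v =
          fderiv ℝ (fun P => f (P, d P₀)) P₀ v + ⟪lam, B v⟫ := by
  obtain ⟨hF, hF'⟩ := total_deriv_aux f d P₀ hd hf
  obtain ⟨-, hR'⟩ := total_deriv_aux R d P₀ hd hR
  refine ⟨hF, fun v => ?_⟩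
  have h0 := hR' v
  rw [← hK, ← hB] at h0
  simp only [hres] at h0
  have hBv : B v = -(K (fderiv ℝ d P₀ v)) := by
    apply eq_neg_of_add_eq_zero_left
    simpa using h0.symm
  have hadj := ContinuousLinearMap.adjoint_inner_left
    (K : EuclideanSpace ℝ (Fin m) →L[ℝ] EuclideanSpace ℝ (Fin m)) (fderiv ℝ d P₀ v) lam
  rw [hlam, inner_neg_left, gradient, InnerProductSpace.toDual_symm_apply] at hadj
  rw [hF' v, hBv, inner_neg_right]
  have : ⟪lam, K (fderiv ℝ d P₀ v)⟫ =
      -(fderiv ℝ (fun y => f (P₀, y)) (d P₀) (fderiv ℝ d P₀ v)) := hadj.symm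
  rw [this, neg_neg]
end

section
/- Let R_L : ℝ^n × ℝ^k → ℝ^k, R : ℝ^n × ℝ^k × ℝ^m → ℝ^m, f : ℝ^n × ℝ^m → ℝ, ξ : ℝ^n → ℝ^k, and d : ℝ^n → ℝ^m satisfy: ξ and d are differentiable at P₀; R_L is differentiable at (P₀, ξ(P₀)) with R_L(P, ξ(P)) = 0 for all P and with invertible partial derivative A = ∂_ξ R_L at that point; R is differentiable at (P₀, ξ(P₀), d(P₀)) with R(P, ξ(P), d(P)) = 0 for all P and with invertible partial derivative K = ∂_d R at that point; and f is differentiable at (P₀, d(P₀)). Denote C = ∂_P R_L, E = ∂_ξ R, B = ∂_P R at the respective points. Then the reduced objective F(P) = f(P, d(P)) is differentiable at P₀ and DF(P₀) = ∂_P f − ∂_d f ∘ K⁻¹ ∘ (B − E ∘ A⁻¹ ∘ C), where ∂_P f and ∂_d f are the partial Fréchet derivatives of f at (P₀, d(P₀)). -/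
theorem fderiv_split_aux {X Y Z : Type*} [NormedAddCommGroup X] [NormedSpace ℝ X]
    [NormedAddCommGroup Y] [NormedSpace ℝ Y] [NormedAddCommGroup Z] [NormedSpace ℝ Z]
    (g : X × Y → Z) (a : X) (b : Y) (hg : DifferentiableAt ℝ g (a, b)) (v : X) (w : Y) :
    fderiv ℝ g (a, b) (v, w) =
      fderiv ℝ (fun x => g (x, b)) a v + fderiv ℝ (fun y => g (a, y)) b w := by
  have h1 : HasFDerivAt (fun x => g (x, b)) _ a :=
    HasFDerivAt.comp a hg.hasFDerivAt (hasFDerivAt_prodMk_left a b)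
  have h2 : HasFDerivAt (fun y => g (a, y)) _ b :=
    HasFDerivAt.comp b hg.hasFDerivAt (hasFDerivAt_prodMk_right a b)
  rw [h1.fderiv, h2.fderiv]
  simp [← map_add]

theorem hasFDerivAt_along_aux {X Y Z : Type*} [NormedAddCommGroup X] [NormedSpace ℝ X]
    [NormedAddCommGroup Y] [NormedSpace ℝ Y] [NormedAddCommGroup Z] [NormedSpace ℝ Z]
    (g : X × Y → Z) (u : X → Y) (u' : X →L[ℝ] Y) (a : X)
    (hg : DifferentiableAt ℝ g (a, u a)) (hu : HasFDerivAt u u' a) :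
    HasFDerivAt (fun x => g (x, u x))
      (fderiv ℝ (fun x => g (x, u a)) a + (fderiv ℝ (fun y => g (a, y)) (u a)).comp u') a := by
  have h : HasFDerivAt (fun x => g (x, u x)) _ a :=
    HasFDerivAt.comp a (f := fun x => (x, u x)) hg.hasFDerivAt ((hasFDerivAt_id a).prodMk hu)
  convert h using 1
  ext v
  simp [fderiv_split_aux g a (u a) hg]

/-- Total derivative for shape optimization of non-matching shells with moving intersections:
`d_P f = ∂_P f - ∂_d f ∘ K⁻¹ ∘ (∂_P R - ∂_ξ R ∘ (∂_ξ R_L)⁻¹ ∘ ∂_P R_L)`.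
Here `ξ(P)` solves the implicit intersection residual `R_L(P, ξ(P)) = 0` with invertible
`A = ∂_ξ R_L`, the displacement `d(P)` solves the coupled equilibrium residual
`R(P, ξ(P), d(P)) = 0` with invertible `K = ∂_d R`, and `F(P) = f(P, d(P))` is the reduced
objective. -/
theorem nonmatching_shell_total_derivative {n k m : ℕ}
    (RL : EuclideanSpace ℝ (Fin n) × EuclideanSpace ℝ (Fin k) → EuclideanSpace ℝ (Fin k))
    (R : EuclideanSpace ℝ (Fin n) × EuclideanSpace ℝ (Fin k) × EuclideanSpace ℝ (Fin m) →
      EuclideanSpace ℝ (Fin m))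
    (f : EuclideanSpace ℝ (Fin n) × EuclideanSpace ℝ (Fin m) → ℝ)
    (ξ : EuclideanSpace ℝ (Fin n) → EuclideanSpace ℝ (Fin k))
    (d : EuclideanSpace ℝ (Fin n) → EuclideanSpace ℝ (Fin m))
    (P₀ : EuclideanSpace ℝ (Fin n))
    (hξ : DifferentiableAt ℝ ξ P₀)
    (hd : DifferentiableAt ℝ d P₀)
    (hRL : DifferentiableAt ℝ RL (P₀, ξ P₀))
    (hresL : ∀ P, RL (P, ξ P) = 0)
    (A : EuclideanSpace ℝ (Fin k) ≃L[ℝ] EuclideanSpace ℝ (Fin k))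
    (hA : (A : EuclideanSpace ℝ (Fin k) →L[ℝ] EuclideanSpace ℝ (Fin k)) =
      fderiv ℝ (fun η => RL (P₀, η)) (ξ P₀))
    (hR : DifferentiableAt ℝ R (P₀, ξ P₀, d P₀))
    (hres : ∀ P, R (P, ξ P, d P) = 0)
    (K : EuclideanSpace ℝ (Fin m) ≃L[ℝ] EuclideanSpace ℝ (Fin m))
    (hK : (K : EuclideanSpace ℝ (Fin m) →L[ℝ] EuclideanSpace ℝ (Fin m)) =
      fderiv ℝ (fun y => R (P₀, ξ P₀, y)) (d P₀))
    (hf : DifferentiableAt ℝ f (P₀, d P₀))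
    (C : EuclideanSpace ℝ (Fin n) →L[ℝ] EuclideanSpace ℝ (Fin k))
    (hC : C = fderiv ℝ (fun P => RL (P, ξ P₀)) P₀)
    (E : EuclideanSpace ℝ (Fin k) →L[ℝ] EuclideanSpace ℝ (Fin m))
    (hE : E = fderiv ℝ (fun η => R (P₀, η, d P₀)) (ξ P₀))
    (B : EuclideanSpace ℝ (Fin n) →L[ℝ] EuclideanSpace ℝ (Fin m))
    (hB : B = fderiv ℝ (fun P => R (P, ξ P₀, d P₀)) P₀) :
    DifferentiableAt ℝ (fun P => f (P, d P)) P₀ ∧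
      fderiv ℝ (fun P => f (P, d P)) P₀ =
        fderiv ℝ (fun P => f (P, d P₀)) P₀ -
          (fderiv ℝ (fun y => f (P₀, y)) (d P₀)).comp
            ((K.symm : EuclideanSpace ℝ (Fin m) →L[ℝ] EuclideanSpace ℝ (Fin m)).comp
              (B - E.comp
                ((A.symm : EuclideanSpace ℝ (Fin k) →L[ℝ] EuclideanSpace ℝ (Fin k)).comp C))) := by
  have h1 := hasFDerivAt_along_aux RL ξ _ P₀ hRL hξ.hasFDerivAt
  have h2 := hasFDerivAt_along_aux R (fun P => (ξ P, d P)) _ P₀ hR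
    (hξ.hasFDerivAt.prodMk hd.hasFDerivAt)
  have h3 := hasFDerivAt_along_aux f d _ P₀ hf hd.hasFDerivAt
  simp only [hresL] at h1
  simp only [hres] at h2
  have e1 := h1.unique (hasFDerivAt_const _ _)
  have e2 := h2.unique (hasFDerivAt_const _ _)
  rw [← hC, ← hA] at e1
  rw [← hB] at e2
  have hR2 : DifferentiableAt ℝ (fun q => R (P₀, q)) (ξ P₀, d P₀) :=
    (HasFDerivAt.comp (ξ P₀, d P₀) hR.hasFDerivAt
      (hasFDerivAt_prodMk_right P₀ (ξ P₀, d P₀))).differentiableAt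
  refine ⟨h3.differentiableAt, ?_⟩
  rw [h3.fderiv, sub_eq_add_neg, ← ContinuousLinearMap.comp_neg]
  congr 2
  ext1 v
  have e1v := DFunLike.congr_fun e1 v
  have e2v := DFunLike.congr_fun e2 v
  simp only [ContinuousLinearMap.add_apply, ContinuousLinearMap.comp_apply,
    ContinuousLinearMap.zero_apply, ContinuousLinearMap.prod_apply,
    ContinuousLinearEquiv.coe_coe] at e1v e2v
  rw [fderiv_split_aux _ _ _ hR2, ← hE, ← hK] at e2v
  have x1 : fderiv ℝ ξ P₀ v = - A.symm (C v) := by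
    rw [← map_neg, ContinuousLinearEquiv.eq_symm_apply]
    exact eq_neg_of_add_eq_zero_right e1v
  rw [x1, map_neg] at e2v
  simp only [ContinuousLinearMap.neg_apply, ContinuousLinearMap.comp_apply,
    ContinuousLinearMap.sub_apply, ContinuousLinearEquiv.coe_coe] at e2v ⊢
  rw [← map_neg, ContinuousLinearEquiv.eq_symm_apply]
  rw [← add_assoc] at e2v
  rw [eq_neg_of_add_eq_zero_right e2v, sub_eq_add_neg]
end
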